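/- arXiv:2605.08026 — 2 statements merged into one kernel-verified Lean document; each statement's English description precedes it below -/
import Mathlib

section
/- Let F : ℝ^n → ℝ^ℓ be locally Lipschitz continuous and directionally differentiable. Fix x, d, ξ ∈ ℝ^n, λ ∈ ℝ^ℓ, and sequences {x^k}, {ξ^k} ⊂ ℝ^n and {λ^k} ⊂ ℝ^ℓ with x^k → x, ξ^k → ξ, λ^k → λ, and ξ^k ∈ ∂⟨λ^k, F⟩(x^k) for all k. Then ξ ∈ ∂⟨λ, F⟩(x). If, additionally, x^k ≠ x for all k and (x^k − x)/‖x^k − x‖ → d, then ξ ∈ ∂⟨λ, F⟩(x; d). -/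
open Filter Topology Metric Set
open scoped RealInnerProductSpace Pointwise

noncomputable section

/-- Euclidean space `ℝ^n`. -/
abbrev Eu (n : ℕ) := EuclideanSpace ℝ (Fin n)

section Cones

variable {H : Type*} [NormedAddCommGroup H] [InnerProductSpace ℝ H]

/-- Tangent (Bouligand) cone to `Ω` at `x` (empty if `x ∉ Ω`). -/
def tanCone (Ω : Set H) (x : H) : Set H :=
  {d | x ∈ Ω ∧ ∃ (dk : ℕ → H) (tk : ℕ → ℝ),
    Tendsto dk atTop (𝓝 d) ∧ (∀ k, 0 < tk k) ∧ Tendsto tk atTop (𝓝 0) ∧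
    ∀ k, x + tk k • dk k ∈ Ω}

/-- Polar cone of a set. -/
def polarCone (C : Set H) : Set H := {y | ∀ x ∈ C, ⟪x, y⟫ ≤ 0}

/-- Regular (Fréchet) normal cone: polar of the tangent cone (empty if `x ∉ Ω`). -/
def regNormal (Ω : Set H) (x : H) : Set H :=
  {η | x ∈ Ω ∧ η ∈ polarCone (tanCone Ω x)}

/-- Limiting (Mordukhovich) normal cone (empty if `x ∉ Ω`). -/
def limNormal (Ω : Set H) (x : H) : Set H :=
  {η | x ∈ Ω ∧ ∃ (xk ηk : ℕ → H),
    Tendsto xk atTop (𝓝 x) ∧ Tendsto ηk atTop (𝓝 η) ∧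
    ∀ k, ηk k ∈ regNormal Ω (xk k)}

/-- Directional limiting normal cone to `Ω` at `x` in direction `d`. -/
def dirLimNormal (Ω : Set H) (x d : H) : Set H :=
  {η | x ∈ Ω ∧ ∃ (dk : ℕ → H) (tk : ℕ → ℝ) (ηk : ℕ → H),
    Tendsto dk atTop (𝓝 d) ∧ (∀ k, 0 < tk k) ∧ Tendsto tk atTop (𝓝 0) ∧
    Tendsto ηk atTop (𝓝 η) ∧
    ∀ k, ηk k ∈ regNormal Ω (x + tk k • dk k)}

/-- The pair `(ξ, r)` as an element of the ℓ²-product `H ×₂ ℝ`. -/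
def pl2 (ξ : H) (r : ℝ) : WithLp 2 (H × ℝ) := (WithLp.equiv 2 (H × ℝ)).symm (ξ, r)

/-- Epigraph of `φ` as a subset of the ℓ²-product `H ×₂ ℝ`. -/
def epigraphSet (φ : H → ℝ) : Set (WithLp 2 (H × ℝ)) :=
  {p | φ ((WithLp.equiv 2 (H × ℝ)) p).1 ≤ ((WithLp.equiv 2 (H × ℝ)) p).2}

/-- Limiting subdifferential of `φ` at `x`. -/
def limSubdiff (φ : H → ℝ) (x : H) : Set H :=
  {ξ | pl2 ξ (-1) ∈ limNormal (epigraphSet φ) (pl2 x (φ x))}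

/-- Directional limiting subdifferential of `φ` at `x` in direction `d`, where `φd`
denotes the directional derivative `φ'(x; d)`. -/
def dirLimSubdiff (φ : H → ℝ) (x d : H) (φd : ℝ) : Set H :=
  {ξ | pl2 ξ (-1) ∈ dirLimNormal (epigraphSet φ) (pl2 x (φ x)) (pl2 d φd)}

/-- Directional neighborhood `B_{ε,δ}(d)`. -/
def dirNbhd (d : H) (ε δ : ℝ) : Set H :=
  {y | ‖y‖ ≤ ε ∧ ‖‖d‖ • y - ‖y‖ • d‖ ≤ δ * (‖y‖ * ‖d‖)}

end Cones

section Problem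

variable {n l : ℕ}

/-- `F' x d` is the directional derivative of `F` at `x` in direction `d`. -/
def IsDirDeriv (F : Eu n → Eu l) (F' : Eu n → Eu n → Eu l) : Prop :=
  ∀ x d : Eu n,
    Tendsto (fun t : ℝ => t⁻¹ • (F (x + t • d) - F x)) (𝓝[>] (0:ℝ)) (𝓝 (F' x d))

/-- Limiting subdifferential of the scalarization `⟨λ, F⟩` at `x`. -/
def scalSubdiff (F : Eu n → Eu l) (lam : Eu l) (x : Eu n) : Set (Eu n) :=
  limSubdiff (fun y => ⟪lam, F y⟫) x

/-- Directional limiting subdifferential of `⟨λ, F⟩` at `x` in direction `d`. -/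
def scalDirSubdiff (F : Eu n → Eu l) (F' : Eu n → Eu n → Eu l) (lam : Eu l)
    (x d : Eu n) : Set (Eu n) :=
  dirLimSubdiff (fun y => ⟪lam, F y⟫) x d ⟪lam, F' x d⟫

/-- Linearization cone. -/
def linCone (F : Eu n → Eu l) (F' : Eu n → Eu n → Eu l) (Γ : Set (Eu l)) (x : Eu n) :
    Set (Eu n) :=
  {d | F' x d ∈ tanCone Γ (F x)}

/-- Explicit critical cone `C(x̄)`. -/
def critCone (f : Eu n → ℝ) (F : Eu n → Eu l) (F' : Eu n → Eu n → Eu l)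
    (Γ : Set (Eu l)) (x : Eu n) : Set (Eu n) :=
  {d | ⟪gradient f x, d⟫ ≤ 0 ∧ d ∈ linCone F F' Γ x}

/-- Implicit critical cone `Ĉ(x̄)`. -/
def implCritCone (f : Eu n → ℝ) (F : Eu n → Eu l) (Γ : Set (Eu l)) (x : Eu n) :
    Set (Eu n) :=
  {d | ⟪gradient f x, d⟫ ≤ 0 ∧ d ∈ tanCone (F ⁻¹' Γ) x}

/-- M-stationarity. -/
def MStat (f : Eu n → ℝ) (F : Eu n → Eu l) (Γ : Set (Eu l)) (x : Eu n) : Prop :=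
  ∃ lam : Eu l, -gradient f x ∈ scalSubdiff F lam x ∧ lam ∈ limNormal Γ (F x)

/-- M-stationarity in direction `d`. -/
def MStatDir (f : Eu n → ℝ) (F : Eu n → Eu l) (F' : Eu n → Eu n → Eu l)
    (Γ : Set (Eu l)) (x d : Eu n) : Prop :=
  ∃ lam : Eu l, -gradient f x ∈ scalDirSubdiff F F' lam x d ∧
    lam ∈ dirLimNormal Γ (F x) (F' x d)

/-- Metric subregularity constraint qualification in direction `d`. -/
def MSCQdir (F : Eu n → Eu l) (Γ : Set (Eu l)) (x d : Eu n) : Prop :=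
  ∃ ε > (0:ℝ), ∃ δ > (0:ℝ), ∃ κ > (0:ℝ), ∀ y : Eu n, y - x ∈ dirNbhd d ε δ →
    infDist y (F ⁻¹' Γ) ≤ κ * infDist (F y) Γ

/-- Metric subregularity constraint qualification. -/
def MSCQ (F : Eu n → Eu l) (Γ : Set (Eu l)) (x : Eu n) : Prop := MSCQdir F Γ x 0

/-- AM-stationary sequence w.r.t. `x`. -/
def AMSeq (f : Eu n → ℝ) (F : Eu n → Eu l) (Γ : Set (Eu l)) (x : Eu n)
    (xk : ℕ → Eu n) (lamk δk : ℕ → Eu l) (εk : ℕ → Eu n) : Prop :=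
  (∀ k, εk k - gradient f (xk k) ∈ scalSubdiff F (lamk k) (xk k)) ∧
  (∀ k, lamk k ∈ limNormal Γ (F (xk k) - δk k)) ∧
  Tendsto xk atTop (𝓝 x) ∧ Tendsto δk atTop (𝓝 0) ∧ Tendsto εk atTop (𝓝 0)

/-- AM-stationarity. -/
def AMStat (f : Eu n → ℝ) (F : Eu n → Eu l) (Γ : Set (Eu l)) (x : Eu n) : Prop :=
  ∃ xk lamk δk εk, AMSeq f F Γ x xk lamk δk εk

/-- AM-stationary sequence w.r.t. `x` in direction `d`. -/
def AMSeqDir (f : Eu n → ℝ) (F : Eu n → Eu l) (Γ : Set (Eu l)) (x : Eu n)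
    (xk : ℕ → Eu n) (lamk δk : ℕ → Eu l) (εk : ℕ → Eu n) (d : Eu n) : Prop :=
  AMSeq f F Γ x xk lamk δk εk ∧
  (∀ k, xk k ≠ x) ∧
  Tendsto (fun k => ‖xk k - x‖⁻¹ • (xk k - x)) atTop (𝓝 d) ∧
  Tendsto (fun k => ‖xk k - x‖⁻¹ • δk k) atTop (𝓝 (0 : Eu l)) ∧
  (∃ θ : ℕ → ℝ, (∀ k, 0 ≤ θ k) ∧ Tendsto θ atTop (𝓝 0) ∧
    ∀ k, ‖‖δk k‖ • lamk k - ‖lamk k‖ • δk k‖ ≤ ‖δk k‖ * ‖lamk k‖ * θ k) ∧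
  (∃ M : ℝ, ∀ k, ‖δk k‖ * ‖lamk k‖ / ‖xk k - x‖ ≤ M)

/-- AM-stationarity in direction `d`. -/
def AMStatDir (f : Eu n → ℝ) (F : Eu n → Eu l) (Γ : Set (Eu l)) (x d : Eu n) : Prop :=
  ∃ xk lamk δk εk, AMSeqDir f F Γ x xk lamk δk εk d

/-- The Minkowski sum `Σ_i |λ_i| ∂(sgn(λ_i) F_i)(x; d)`. -/
def dirSumSet (F : Eu n → Eu l) (F' : Eu n → Eu n → Eu l) (lam : Eu l) (x d : Eu n) :
    Set (Eu n) :=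
  {v | ∃ s : Fin l → Eu n,
    (∀ i, s i ∈ |lam i| • dirLimSubdiff (fun y => Real.sign (lam i) * F y i) x d
        (Real.sign (lam i) * F' x d i)) ∧
    v = ∑ i, s i}

/-- Standing sum-rule assumption. -/
def SumRule (F : Eu n → Eu l) (F' : Eu n → Eu n → Eu l) : Prop :=
  ∀ (x d : Eu n) (lam : Eu l), scalDirSubdiff F F' lam x d = dirSumSet F F' lam x d

end Problem

/-!
Regular subgradients are exactly the first-order lower supports of a function, so if `φ` has a
regular subgradient at `y` and `ψ - φ` is `K`-Lipschitz near `y`, the same vector supports `ψ` at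
`y` up to the error `K * ‖w - y‖`. Minimizing `ψ` minus this support plus a steep quadratic over a
small ball and applying Fermat's rule turns such an approximate subgradient into a genuine regular
subgradient of `ψ` at an arbitrarily close point; the vector moves by at most `2 * K` plus a small
error. For the scalarizations by `λ` and `λᵏ` the constant `K` is a multiple of `‖λᵏ - λ‖`, which
tends to zero.
In the directional case the distance of the new point from `xᵏ` is taken of order
`o(‖xᵏ - x‖)`, which preserves the direction of approach `d`.
-/

section Epigraph

variable {H : Type*} {φ : H → ℝ}

lemma tendsto_pl2_iff [NormedAddCommGroup H] {ι : Type*} {f : Filter ι} {u : ι → H} {a : ι → ℝ}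
    {u₀ : H} {a₀ : ℝ} :
    Tendsto (fun i => pl2 (u i) (a i)) f (𝓝 (pl2 u₀ a₀)) ↔
      Tendsto u f (𝓝 u₀) ∧ Tendsto a f (𝓝 a₀) :=
  ⟨fun h => ⟨((WithLp.continuous_fst 2 H ℝ).tendsto _).comp h,
      ((WithLp.continuous_snd 2 H ℝ).tendsto _).comp h⟩,
    fun h => ((WithLp.prod_continuous_toLp 2 H ℝ).tendsto (u₀, a₀)).comp (h.1.prodMk_nhds h.2)⟩

variable [NormedAddCommGroup H] [InnerProductSpace ℝ H]

lemma inner_pl2 (u v : H) (a b : ℝ) : ⟪pl2 u a, pl2 v b⟫ = ⟪u, v⟫ + a * b := by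
  simp [WithLp.prod_inner_apply, pl2, mul_comm]

lemma pl2_add_smul_pl2 (u v : H) (a b t : ℝ) :
    pl2 u a + t • pl2 v b = pl2 (u + t • v) (a + t * b) := rfl

lemma pl2_mem_tanCone_epigraphSet_iff {x u : H} {α a : ℝ} :
    pl2 u a ∈ tanCone (epigraphSet φ) (pl2 x α) ↔
      φ x ≤ α ∧ ∃ (uk : ℕ → H) (ak tk : ℕ → ℝ), Tendsto uk atTop (𝓝 u) ∧
        Tendsto ak atTop (𝓝 a) ∧ (∀ k, 0 < tk k) ∧ Tendsto tk atTop (𝓝 0) ∧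
        ∀ k, φ (x + tk k • uk k) ≤ α + tk k * ak k := by
  constructor
  · rintro ⟨hx, dk, tk, hd, htpos, ht, hmem⟩
    obtain ⟨hu, ha⟩ := tendsto_pl2_iff.1 hd
    exact ⟨hx, fun k => (dk k).fst, fun k => (dk k).snd, tk, hu, ha, htpos, ht, hmem⟩
  · rintro ⟨hx, uk, ak, tk, hu, ha, htpos, ht, hle⟩
    exact ⟨hx, fun k => pl2 (uk k) (ak k), tk, tendsto_pl2_iff.2 ⟨hu, ha⟩, htpos, ht, hle⟩

lemma pl2_mem_regNormal_epigraphSet_iff {x η : H} {α β : ℝ} :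
    pl2 η β ∈ regNormal (epigraphSet φ) (pl2 x α) ↔
      φ x ≤ α ∧ ∀ u a, pl2 u a ∈ tanCone (epigraphSet φ) (pl2 x α) → ⟪η, u⟫ + a * β ≤ 0 := by
  refine and_congr Iff.rfl ⟨fun h u a hua => ?_, fun h p hp => ?_⟩
  · rw [real_inner_comm, ← inner_pl2]
    exact h _ hua
  · have := h p.fst p.snd hp
    rwa [real_inner_comm, ← inner_pl2] at this

lemma smul_mem_regNormal {Ω : Set H} {x η : H} {c : ℝ} (hc : 0 ≤ c) (hη : η ∈ regNormal Ω x) :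
    c • η ∈ regNormal Ω x := by
  refine ⟨hη.1, fun v hv => ?_⟩
  rw [inner_smul_right]
  exact mul_nonpos_of_nonneg_of_nonpos hc (hη.2 v hv)

/-- Above the graph the downward direction `(0, -1)` is tangent to the epigraph, so normals with
negative last component live on the graph. -/
lemma eq_of_pl2_mem_regNormal_epigraphSet {x η : H} {α β : ℝ} (hβ : β < 0)
    (h : pl2 η β ∈ regNormal (epigraphSet φ) (pl2 x α)) : α = φ x := by
  obtain ⟨hx, hpolar⟩ := pl2_mem_regNormal_epigraphSet_iff.1 h
  by_contra hne
  have hgap : 0 < α - φ x := sub_pos.2 (lt_of_le_of_ne hx (Ne.symm hne))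
  have hdown : pl2 0 (-1) ∈ tanCone (epigraphSet φ) (pl2 x α) := by
    refine pl2_mem_tanCone_epigraphSet_iff.2 ⟨hx, fun _ => 0, fun _ => -1,
      fun k => (α - φ x) * (1 / ((k : ℝ) + 1)), tendsto_const_nhds, tendsto_const_nhds,
      fun _ => mul_pos hgap Nat.one_div_pos_of_nat, ?_, fun k => ?_⟩
    · simpa only [mul_zero] using
        (tendsto_one_div_add_atTop_nhds_zero_nat (𝕜 := ℝ)).const_mul (α - φ x)
    · have hle : 1 / ((k : ℝ) + 1) ≤ 1 := Nat.one_div_le_one_div (Nat.zero_le k) |>.trans (by simp)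
      rw [smul_zero, add_zero]
      nlinarith
  have := hpolar 0 (-1) hdown
  rw [inner_zero_right] at this
  linarith

end Epigraph

section RegularSubdifferential

variable {H : Type*} [NormedAddCommGroup H] [InnerProductSpace ℝ H] {φ : H → ℝ}

/-- The regular (Fréchet) subdifferential of `φ` at `x`, defined like `limSubdiff` through normals
to the epigraph; limiting subgradients are limits of its elements at nearby points. -/
def regSubdiff (φ : H → ℝ) (x : H) : Set H :=
  {ξ | pl2 ξ (-1) ∈ regNormal (epigraphSet φ) (pl2 x (φ x))}

lemma mem_regSubdiff_of_forall_eventually_le {x η : H}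
    (h : ∀ ε > 0, ∀ᶠ w in 𝓝 x, ⟪η, w - x⟫ - ε * ‖w - x‖ ≤ φ w - φ x) :
    η ∈ regSubdiff φ x := by
  refine pl2_mem_regNormal_epigraphSet_iff.2 ⟨le_rfl, fun u a hua => ?_⟩
  obtain ⟨-, uk, ak, tk, hu, ha, htpos, ht, hle⟩ := pl2_mem_tanCone_epigraphSet_iff.1 hua
  have hw : Tendsto (fun k => x + tk k • uk k) atTop (𝓝 x) := by
    simpa only [zero_smul, add_zero] using (ht.smul hu).const_add x
  have hsupport (ε : ℝ) (hε : 0 < ε) : ⟪η, u⟫ - ε * ‖u‖ ≤ a := by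
    refine le_of_tendsto_of_tendsto ((tendsto_const_nhds.inner hu).sub (hu.norm.const_mul ε)) ha ?_
    filter_upwards [hw.eventually (h ε hε)] with k hk
    rw [add_sub_cancel_left, inner_smul_right, norm_smul, Real.norm_of_nonneg (htpos k).le] at hk
    refine le_of_mul_le_mul_left ?_ (htpos k)
    linarith [hle k]
  have hlim : Tendsto (fun ε : ℝ => ⟪η, u⟫ - ε * ‖u‖) (𝓝[>] 0) (𝓝 ⟪η, u⟫) :=
    tendsto_nhdsWithin_of_tendsto_nhds (Continuous.tendsto' (by fun_prop) _ _ (by simp))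
  linarith [le_of_tendsto hlim (eventually_mem_nhdsWithin.mono hsupport)]

/-- If the inequality failed along `w k → x`, a limit `u` of the normalized differences would give
the tangent `(u, ⟪η, u⟫ - ε)` to the epigraph, which makes an acute angle with `(η, -1)`. -/
lemma eventually_le_of_mem_regSubdiff [ProperSpace H] {x η : H} (hη : η ∈ regSubdiff φ x)
    {ε : ℝ} (hε : 0 < ε) : ∀ᶠ w in 𝓝 x, ⟪η, w - x⟫ - ε * ‖w - x‖ ≤ φ w - φ x := by
  by_contra hfreq
  obtain ⟨w, hw, hlt⟩ := exists_seq_forall_of_frequently (not_eventually.1 hfreq)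
  simp only [not_le] at hlt
  have hpos (k : ℕ) : 0 < ‖w k - x‖ := by
    rw [norm_pos_iff, sub_ne_zero]
    intro heq
    simpa [heq] using hlt k
  have hzero : Tendsto (fun k => ‖w k - x‖) atTop (𝓝 0) := tendsto_iff_norm_sub_tendsto_zero.1 hw
  obtain ⟨u, -, g, hg, hu⟩ := (isCompact_sphere (0 : H) 1).tendsto_subseq
    (x := fun k => ‖w k - x‖⁻¹ • (w k - x)) fun k => by simp [norm_smul, (hpos k).ne']
  have htan : pl2 u (⟪η, u⟫ - ε) ∈ tanCone (epigraphSet φ) (pl2 x (φ x)) := by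
    refine pl2_mem_tanCone_epigraphSet_iff.2 ⟨le_rfl, _, _, fun k => ‖w (g k) - x‖, hu,
      (tendsto_const_nhds.inner hu).sub_const ε, fun k => hpos _, hzero.comp hg.tendsto_atTop,
      fun k => ?_⟩
    simp only [Function.comp_apply]
    rw [smul_inv_smul₀ (hpos _).ne', add_sub_cancel, inner_smul_right, mul_sub,
      mul_inv_cancel_left₀ (hpos _).ne']
    linarith [hlt (g k)]
  linarith [(pl2_mem_regNormal_epigraphSet_iff.1 hη).2 _ _ htan]

lemma inv_neg_smul_mem_regSubdiff {x η : H} {α β : ℝ} (hβ : β < 0)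
    (h : pl2 η β ∈ regNormal (epigraphSet φ) (pl2 x α)) : (-β)⁻¹ • η ∈ regSubdiff φ x := by
  obtain rfl := eq_of_pl2_mem_regNormal_epigraphSet hβ h
  have hscale : (-β)⁻¹ * β = -1 := by rw [inv_neg, neg_mul, inv_mul_cancel₀ hβ.ne]
  have hreg : pl2 ((-β)⁻¹ • η) ((-β)⁻¹ * β) ∈ regNormal (epigraphSet φ) (pl2 x (φ x)) :=
    smul_mem_regNormal (inv_nonneg.2 (neg_nonneg.2 hβ.le)) h
  rwa [hscale] at hreg

lemma neg_mem_regSubdiff_of_isLocalMin_add {g : H → ℝ} {v z : H}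
    (hg : HasFDerivAt g (innerSL ℝ v) z) (hmin : IsLocalMin (fun w => φ w + g w) z) :
    -v ∈ regSubdiff φ z := by
  refine mem_regSubdiff_of_forall_eventually_le fun ε hε => ?_
  filter_upwards [hmin, hg.isLittleO.bound hε] with w hw hgw
  rw [innerSL_apply_apply, Real.norm_eq_abs, abs_le] at hgw
  rw [inner_neg_left]
  linarith [hgw.2]

lemma sub_smul_mem_regSubdiff_of_isLocalMin {y z η : H} {c : ℝ}
    (hmin : IsLocalMin (fun w => φ w + (c / 2 * ‖w - y‖ ^ 2 - ⟪η, w - y⟫)) z) :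
    η - c • (z - y) ∈ regSubdiff φ z := by
  have hsub : HasFDerivAt (fun w : H => w - y) (.id ℝ H) z := (hasFDerivAt_id z).sub_const y
  have hderiv : HasFDerivAt (fun w => c / 2 * ‖w - y‖ ^ 2 - ⟪η, w - y⟫)
      (innerSL ℝ (c • (z - y) - η)) z := by
    refine ((hsub.norm_sq.const_mul (c / 2)).sub
      ((innerSL ℝ η).hasFDerivAt.comp z hsub)).congr_fderiv ?_
    simp only [ContinuousLinearMap.comp_id, map_sub, map_smulₛₗ, conj_trivial]
    module
  simpa only [neg_sub] using neg_mem_regSubdiff_of_isLocalMin_add hderiv hmin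

end RegularSubdifferential

section LimitingSubdifferential

variable {H : Type*} [NormedAddCommGroup H] [InnerProductSpace ℝ H] {φ : H → ℝ} {x ξ : H}

lemma mem_closure_of_mem_limSubdiff (h : ξ ∈ limSubdiff φ x) :
    (x, ξ) ∈ closure {p : H × H | p.2 ∈ regSubdiff φ p.1} := by
  obtain ⟨-, pk, qk, hp, hq, hreg⟩ := h
  obtain ⟨hy, -⟩ := (tendsto_pl2_iff (u := fun k => (pk k).fst) (a := fun k => (pk k).snd)).1 hp
  obtain ⟨hη, hβ⟩ := (tendsto_pl2_iff (u := fun k => (qk k).fst) (a := fun k => (qk k).snd)).1 hq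
  have hscaled : Tendsto (fun k => (-(qk k).snd)⁻¹ • (qk k).fst) atTop (𝓝 ξ) := by
    simpa only [neg_neg, inv_one, one_smul] using (hβ.neg.inv₀ (by simp)).smul hη
  refine mem_closure_of_tendsto (hy.prodMk_nhds hscaled) ?_
  filter_upwards [hβ.eventually (gt_mem_nhds (by simp : (-1 : ℝ) < 0))] with k hk
  exact inv_neg_smul_mem_regSubdiff hk (hreg k)

lemma mem_limSubdiff_of_mem_closure (hφ : ContinuousAt φ x)
    (h : (x, ξ) ∈ closure {p : H × H | p.2 ∈ regSubdiff φ p.1}) : ξ ∈ limSubdiff φ x := by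
  obtain ⟨p, hreg, hp⟩ := mem_closure_iff_seq_limit.1 h
  obtain ⟨hz, hη⟩ := Prod.tendsto_iff _ _ |>.1 hp
  exact ⟨le_refl (φ x), fun k => pl2 (p k).1 (φ (p k).1), fun k => pl2 (p k).2 (-1),
    tendsto_pl2_iff.2 ⟨hz, hφ.tendsto.comp hz⟩, tendsto_pl2_iff.2 ⟨hη, tendsto_const_nhds⟩, hreg⟩

lemma mem_dirLimSubdiff_of_frequently {ι : Type*} {f : Filter ι} [f.IsCountablyGenerated]
    {d : H} {v : ℝ} {t : ι → ℝ} {z η : ι → H} (ht : Tendsto t f (𝓝[>] 0))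
    (hz : Tendsto (fun i => (t i)⁻¹ • (z i - x)) f (𝓝 d))
    (hφ : Tendsto (fun i => (t i)⁻¹ * (φ (z i) - φ x)) f (𝓝 v))
    (hη : Tendsto η f (𝓝 ξ)) (h : ∃ᶠ i in f, η i ∈ regSubdiff φ (z i)) :
    ξ ∈ dirLimSubdiff φ x d v := by
  obtain ⟨ht0, htpos⟩ := tendsto_nhdsWithin_iff.1 ht
  obtain ⟨s, hs, hmem⟩ := exists_seq_forall_of_frequently (h.and_eventually htpos)
  refine ⟨le_refl (φ x), _, fun k => t (s k), fun k => pl2 (η (s k)) (-1),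
    tendsto_pl2_iff.2 ⟨hz.comp hs, hφ.comp hs⟩, fun k => (hmem k).2, ht0.comp hs,
    tendsto_pl2_iff.2 ⟨hη.comp hs, tendsto_const_nhds⟩, fun k => ?_⟩
  obtain ⟨hreg, hpos⟩ := hmem k
  simp only [Function.comp_apply]
  rw [pl2_add_smul_pl2, smul_inv_smul₀ (ne_of_gt hpos), mul_inv_cancel_left₀ (ne_of_gt hpos),
    add_sub_cancel, add_sub_cancel]
  exact hreg

end LimitingSubdifferential

section Perturbation

variable {H : Type*} [NormedAddCommGroup H] [InnerProductSpace ℝ H] [ProperSpace H] {U : Set H}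

lemma exists_mem_regSubdiff_of_eventually_le {φ : H → ℝ} {y η : H} {ε ρ : ℝ} (hU : U ∈ 𝓝 y)
    (hφ : LowerSemicontinuousOn φ U) (hε : 0 ≤ ε) (hρ : 0 < ρ)
    (h : ∀ᶠ w in 𝓝 y, ⟪η, w - y⟫ - ε * ‖w - y‖ ≤ φ w - φ y) :
    ∃ z η', dist z y < ρ ∧ dist η' η ≤ 2 * ε ∧ η' ∈ regSubdiff φ z := by
  obtain ⟨r₀, hr₀, hball⟩ := nhds_basis_closedBall.mem_iff.1 (inter_mem hU h)
  let r := min r₀ (ρ / 2)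
  have hr : 0 < r := lt_min hr₀ (half_pos hρ)
  have hsub : closedBall y r ⊆ U ∩ {w | ⟪η, w - y⟫ - ε * ‖w - y‖ ≤ φ w - φ y} :=
    (closedBall_subset_closedBall (min_le_left _ _)).trans hball
  -- With this penalty, minimizers over the ball satisfy `c * ‖z - y‖ ≤ 2 * ε < c * r`.
  let c := (2 * ε + 1) / r
  have hc : 0 < c := by positivity
  have hcr : c * r = 2 * ε + 1 := div_mul_cancel₀ _ hr.ne'
  let g : H → ℝ := fun w => c / 2 * ‖w - y‖ ^ 2 - ⟪η, w - y⟫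
  have hlsc : LowerSemicontinuousOn (fun w => φ w + g w) (closedBall y r) :=
    (hφ.mono fun w hw => (hsub hw).1).add
      ((by fun_prop : Continuous g).lowerSemicontinuous.lowerSemicontinuousOn _)
  obtain ⟨z, hz, hmin⟩ := hlsc.exists_isMinOn ⟨y, mem_closedBall_self hr.le⟩
    (isCompact_closedBall y r)
  have hzle : φ z + g z ≤ φ y := by
    simpa [g] using hmin (mem_closedBall_self hr.le)
  have hnorm : c * ‖z - y‖ ≤ 2 * ε := by
    have hsupport : ⟪η, z - y⟫ - ε * ‖z - y‖ ≤ φ z - φ y := (hsub hz).2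
    simp only [g] at hzle
    rcases (norm_nonneg (z - y)).eq_or_lt with hzero | hpos
    · rw [← hzero, mul_zero]
      positivity
    · nlinarith
  have hzr : dist z y < r := by
    rw [dist_eq_norm]
    exact lt_of_mul_lt_mul_left (by linarith) hc.le
  refine ⟨z, η - c • (z - y), hzr.trans_le ((min_le_right _ _).trans (half_le_self hρ.le)), ?_,
    sub_smul_mem_regSubdiff_of_isLocalMin
      (hmin.isLocalMin (closedBall_mem_nhds_of_mem (mem_ball.2 hzr)))⟩
  rwa [dist_eq_norm, sub_sub_cancel_left, norm_neg, norm_smul, Real.norm_of_nonneg hc.le]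

lemma exists_mem_regSubdiff_of_lipschitzOnWith_sub {φ ψ : H → ℝ} {x ξ : H} {K : NNReal} {τ : ℝ}
    (hU : U ∈ 𝓝 x) (hψ : LowerSemicontinuousOn ψ U)
    (hK : LipschitzOnWith K (fun w => ψ w - φ w) U) (hξ : ξ ∈ limSubdiff φ x) (hτ : 0 < τ) :
    ∃ z η, dist z x < τ ∧ dist η ξ ≤ 2 * K + τ ∧ η ∈ regSubdiff ψ z := by
  obtain ⟨⟨y, η₀⟩, ⟨⟨hyU, hyx⟩, hη₀ξ⟩, hη₀⟩ := mem_closure_iff_nhds.1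
    (mem_closure_of_mem_limSubdiff hξ) _
    (prod_mem_nhds (inter_mem (eventually_mem_nhds_iff.2 hU) (ball_mem_nhds x (half_pos hτ)))
      (ball_mem_nhds ξ (half_pos hτ)))
  have happrox : ∀ᶠ w in 𝓝 y, ⟪η₀, w - y⟫ - (K + τ / 4) * ‖w - y‖ ≤ ψ w - ψ y := by
    filter_upwards [eventually_le_of_mem_regSubdiff hη₀ (by positivity : 0 < τ / 4), hyU]
      with w hw hwU
    have hlip := hK.dist_le_mul w hwU y (mem_of_mem_nhds hyU)
    rw [Real.dist_eq, abs_le, dist_eq_norm] at hlip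
    linarith [hlip.1]
  obtain ⟨z, η, hzy, hηη₀, hη⟩ := exists_mem_regSubdiff_of_eventually_le hyU hψ
    (by positivity) (half_pos hτ) happrox
  rw [mem_ball] at hyx hη₀ξ
  exact ⟨z, η, by linarith [dist_triangle z y x], by linarith [dist_triangle η η₀ ξ], hη⟩

end Perturbation

section DirectionalLimits

variable {E G : Type*} [NormedAddCommGroup E] [NormedSpace ℝ E] [NormedAddCommGroup G]
  [NormedSpace ℝ G] {ι : Type*} {f : Filter ι} {t : ι → ℝ} {x d : E} {z : ι → E}

lemma tendsto_of_tendsto_inv_smul_sub (ht : Tendsto t f (𝓝[>] 0))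
    (hz : Tendsto (fun i => (t i)⁻¹ • (z i - x)) f (𝓝 d)) : Tendsto z f (𝓝 x) := by
  obtain ⟨ht0, htpos⟩ := tendsto_nhdsWithin_iff.1 ht
  have hlim : Tendsto (fun i => x + t i • (t i)⁻¹ • (z i - x)) f (𝓝 x) := by
    simpa only [zero_smul, add_zero] using (ht0.smul hz).const_add x
  refine hlim.congr' (htpos.mono fun i hi => ?_)
  rw [smul_inv_smul₀ (ne_of_gt hi), add_sub_cancel]

lemma tendsto_inv_smul_sub_of_lipschitzOnWith {F : E → G} {K : NNReal} {U : Set E} {v : G}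
    (hU : U ∈ 𝓝 x) (hF : LipschitzOnWith K F U)
    (hv : Tendsto (fun s : ℝ => s⁻¹ • (F (x + s • d) - F x)) (𝓝[>] 0) (𝓝 v))
    (ht : Tendsto t f (𝓝[>] 0)) (hz : Tendsto (fun i => (t i)⁻¹ • (z i - x)) f (𝓝 d)) :
    Tendsto (fun i => (t i)⁻¹ • (F (z i) - F x)) f (𝓝 v) := by
  obtain ⟨ht0, htpos⟩ := tendsto_nhdsWithin_iff.1 ht
  have hray : Tendsto (fun i => x + t i • d) f (𝓝 x) := by
    simpa only [zero_smul, add_zero] using (ht0.smul_const d).const_add x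
  have hbound : Tendsto (fun i => (K : ℝ) * ‖(t i)⁻¹ • (z i - x) - d‖) f (𝓝 0) := by
    simpa only [mul_zero] using (tendsto_iff_norm_sub_tendsto_zero.1 hz).const_mul (K : ℝ)
  have hdiff : Tendsto (fun i => (t i)⁻¹ • (F (z i) - F (x + t i • d))) f (𝓝 0) := by
    refine squeeze_zero_norm' ?_ hbound
    filter_upwards [htpos, (tendsto_of_tendsto_inv_smul_sub ht hz).eventually hU,
      hray.eventually hU] with i hi hzU hrayU
    have hi : 0 < t i := hi
    calc ‖(t i)⁻¹ • (F (z i) - F (x + t i • d))‖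
        = (t i)⁻¹ * ‖F (z i) - F (x + t i • d)‖ := by rw [norm_smul_of_nonneg (by positivity)]
      _ ≤ (t i)⁻¹ * (K * ‖z i - (x + t i • d)‖) := by gcongr; exact hF.norm_sub_le hzU hrayU
      _ = K * ‖(t i)⁻¹ • (z i - (x + t i • d))‖ := by
        rw [norm_smul_of_nonneg (by positivity)]; ring
      _ = K * ‖(t i)⁻¹ • (z i - x) - d‖ := by
        rw [← sub_sub, smul_sub _ (z i - x), inv_smul_smul₀ hi.ne']
  simpa only [Function.comp_apply, ← smul_add, sub_add_sub_cancel, zero_add]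
    using hdiff.add (hv.comp ht)

end DirectionalLimits

section Scalarization

variable {G : Type*} [NormedAddCommGroup G] [InnerProductSpace ℝ G] {K : NNReal}

lemma lipschitzOnWith_const_inner {X : Type*} [PseudoEMetricSpace X] {F : X → G} {U : Set X}
    (hF : LipschitzOnWith K F U) (μ : G) : LipschitzOnWith (‖μ‖₊ * K) (fun y => ⟪μ, F y⟫) U := by
  have hμ : ‖innerSL ℝ μ‖₊ = ‖μ‖₊ := NNReal.eq (innerSL_apply_norm ℝ μ)
  rw [← hμ]
  exact (innerSL ℝ μ).lipschitz.comp_lipschitzOnWith hF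

variable {H : Type*} [NormedAddCommGroup H] [InnerProductSpace ℝ H] [ProperSpace H] {F : H → G}
  {U : Set H} {x ξ : H} {lam : G} {xk ξk : ℕ → H} {lamk : ℕ → G}

lemma exists_seq_mem_regSubdiff_inner (hU : U ∈ 𝓝 x) (hF : LipschitzOnWith K F U)
    (hxk : Tendsto xk atTop (𝓝 x)) (hξk : Tendsto ξk atTop (𝓝 ξ))
    (hlamk : Tendsto lamk atTop (𝓝 lam))
    (hmem : ∀ k, ξk k ∈ limSubdiff (fun y => ⟪lamk k, F y⟫) (xk k))
    {τ : ℕ → ℝ} (hτ : Tendsto τ atTop (𝓝[>] 0)) :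
    ∃ z η : ℕ → H, (∀ᶠ k in atTop, dist (z k) (xk k) ≤ τ k) ∧ Tendsto η atTop (𝓝 ξ) ∧
      ∀ᶠ k in atTop, η k ∈ regSubdiff (fun y => ⟪lam, F y⟫) (z k) := by
  obtain ⟨hτ0, hτpos⟩ := tendsto_nhdsWithin_iff.1 hτ
  have hlip (k : ℕ) : LipschitzOnWith (‖lam - lamk k‖₊ * K)
      (fun y => ⟪lam, F y⟫ - ⟪lamk k, F y⟫) U := by
    simpa only [inner_sub_left] using lipschitzOnWith_const_inner hF (lam - lamk k)
  choose! z η hz hη hreg using fun k (hk : U ∈ 𝓝 (xk k) ∧ 0 < τ k) =>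
    exists_mem_regSubdiff_of_lipschitzOnWith_sub hk.1
      (lipschitzOnWith_const_inner hF lam).continuousOn.lowerSemicontinuousOn (hlip k) (hmem k) hk.2
  have hgood : ∀ᶠ k in atTop, U ∈ 𝓝 (xk k) ∧ 0 < τ k :=
    (hxk.eventually (eventually_mem_nhds_iff.2 hU)).and hτpos
  have hbound : Tendsto (fun k => 2 * (‖lam - lamk k‖ * K) + τ k) atTop (𝓝 0) := by
    have hlam : Tendsto (fun k => ‖lam - lamk k‖) atTop (𝓝 0) := by
      simpa only [sub_self, norm_zero] using (hlamk.const_sub lam).norm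
    simpa only [zero_mul, mul_zero, add_zero] using ((hlam.mul_const (K : ℝ)).const_mul 2).add hτ0
  have hdist : Tendsto (fun k => dist (η k) (ξk k)) atTop (𝓝 0) :=
    squeeze_zero' (.of_forall fun _ => dist_nonneg) (hgood.mono hη) hbound
  exact ⟨z, η, hgood.mono fun k hk => (hz k hk).le, (tendsto_iff_of_dist hdist).2 hξk,
    hgood.mono hreg⟩

theorem mem_limSubdiff_inner_of_tendsto (hU : U ∈ 𝓝 x) (hF : LipschitzOnWith K F U)
    (hxk : Tendsto xk atTop (𝓝 x)) (hξk : Tendsto ξk atTop (𝓝 ξ))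
    (hlamk : Tendsto lamk atTop (𝓝 lam))
    (hmem : ∀ k, ξk k ∈ limSubdiff (fun y => ⟪lamk k, F y⟫) (xk k)) :
    ξ ∈ limSubdiff (fun y => ⟪lam, F y⟫) x := by
  have hτ0 : Tendsto (fun k : ℕ => 1 / ((k : ℝ) + 1)) atTop (𝓝 0) :=
    tendsto_one_div_add_atTop_nhds_zero_nat
  obtain ⟨z, η, hz, hη, hreg⟩ := exists_seq_mem_regSubdiff_inner hU hF hxk hξk hlamk hmem
    (tendsto_nhdsWithin_iff.2 ⟨hτ0, .of_forall fun _ => mem_Ioi.2 Nat.one_div_pos_of_nat⟩)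
  have hzx : Tendsto z atTop (𝓝 x) :=
    (tendsto_iff_of_dist (squeeze_zero' (.of_forall fun _ => dist_nonneg) hz hτ0)).2 hxk
  exact mem_limSubdiff_of_mem_closure
    ((lipschitzOnWith_const_inner hF lam).continuousOn.continuousAt hU)
    (mem_closure_of_tendsto (hzx.prodMk_nhds hη) hreg)

theorem mem_dirLimSubdiff_inner_of_tendsto {d : H} {v : G} {t : ℕ → ℝ}
    (hU : U ∈ 𝓝 x) (hF : LipschitzOnWith K F U)
    (hv : Tendsto (fun s : ℝ => s⁻¹ • (F (x + s • d) - F x)) (𝓝[>] 0) (𝓝 v))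
    (ht : Tendsto t atTop (𝓝[>] 0))
    (hxk : Tendsto (fun k => (t k)⁻¹ • (xk k - x)) atTop (𝓝 d))
    (hξk : Tendsto ξk atTop (𝓝 ξ)) (hlamk : Tendsto lamk atTop (𝓝 lam))
    (hmem : ∀ k, ξk k ∈ limSubdiff (fun y => ⟪lamk k, F y⟫) (xk k)) :
    ξ ∈ dirLimSubdiff (fun y => ⟪lam, F y⟫) x d ⟪lam, v⟫ := by
  obtain ⟨ht0, htpos⟩ := tendsto_nhdsWithin_iff.1 ht
  have hτ : Tendsto (fun k => t k * t k) atTop (𝓝[>] 0) := tendsto_nhdsWithin_iff.2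
    ⟨by simpa only [mul_zero] using ht0.mul ht0, htpos.mono fun _ hk => mem_Ioi.2 (mul_pos hk hk)⟩
  obtain ⟨z, η, hz, hη, hreg⟩ := exists_seq_mem_regSubdiff_inner hU hF
    (tendsto_of_tendsto_inv_smul_sub ht hxk) hξk hlamk hmem hτ
  have hzxk : Tendsto (fun k => (t k)⁻¹ • (z k - xk k)) atTop (𝓝 0) := by
    refine squeeze_zero_norm' ?_ ht0
    filter_upwards [hz, htpos] with k hk hpos
    have hpos : 0 < t k := hpos
    rwa [norm_smul_of_nonneg (by positivity), inv_mul_le_iff₀ hpos, ← dist_eq_norm]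
  have hzx : Tendsto (fun k => (t k)⁻¹ • (z k - x)) atTop (𝓝 d) := by
    simpa only [← smul_add, sub_add_sub_cancel, zero_add] using hzxk.add hxk
  have hslope : Tendsto (fun k => ⟪lam, (t k)⁻¹ • (F (z k) - F x)⟫) atTop (𝓝 ⟪lam, v⟫) :=
    tendsto_const_nhds.inner (tendsto_inv_smul_sub_of_lipschitzOnWith hU hF hv ht hzx)
  simp only [inner_smul_right, inner_sub_right] at hslope
  exact mem_dirLimSubdiff_of_frequently ht hzx hslope hη hreg.frequently

theorem stmt0_general {d : H} {v : G} (hU : U ∈ 𝓝 x) (hF : LipschitzOnWith K F U)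
    (hv : Tendsto (fun s : ℝ => s⁻¹ • (F (x + s • d) - F x)) (𝓝[>] 0) (𝓝 v))
    (hxk : Tendsto xk atTop (𝓝 x)) (hξk : Tendsto ξk atTop (𝓝 ξ))
    (hlamk : Tendsto lamk atTop (𝓝 lam))
    (hmem : ∀ k, ξk k ∈ limSubdiff (fun y => ⟪lamk k, F y⟫) (xk k)) :
    ξ ∈ limSubdiff (fun y => ⟪lam, F y⟫) x ∧
    ((∀ k, xk k ≠ x) →
      Tendsto (fun k => ‖xk k - x‖⁻¹ • (xk k - x)) atTop (𝓝 d) →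
      ξ ∈ dirLimSubdiff (fun y => ⟪lam, F y⟫) x d ⟪lam, v⟫) := by
  refine ⟨mem_limSubdiff_inner_of_tendsto hU hF hxk hξk hlamk hmem, fun hne hdir => ?_⟩
  have ht : Tendsto (fun k => ‖xk k - x‖) atTop (𝓝[>] 0) := tendsto_nhdsWithin_iff.2
    ⟨tendsto_iff_norm_sub_tendsto_zero.1 hxk, .of_forall fun k => norm_sub_pos_iff.2 (hne k)⟩
  exact mem_dirLimSubdiff_inner_of_tendsto hU hF hv ht hdir hξk hlamk hmem

end Scalarization

/-- Robustness of the (directional) limiting subdifferential of scalarizations. -/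
theorem stmt0 {n l : ℕ}
    (F : Eu n → Eu l) (F' : Eu n → Eu n → Eu l)
    (hLip : LocallyLipschitz F) (hF' : IsDirDeriv F F')
    (x d ξ : Eu n) (lam : Eu l)
    (xk ξk : ℕ → Eu n) (lamk : ℕ → Eu l)
    (hxk : Tendsto xk atTop (𝓝 x)) (hξk : Tendsto ξk atTop (𝓝 ξ))
    (hlamk : Tendsto lamk atTop (𝓝 lam))
    (hmem : ∀ k, ξk k ∈ scalSubdiff F (lamk k) (xk k)) :
    ξ ∈ scalSubdiff F lam x ∧
    ((∀ k, xk k ≠ x) →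
      Tendsto (fun k => ‖xk k - x‖⁻¹ • (xk k - x)) atTop (𝓝 d) →
      ξ ∈ scalDirSubdiff F F' lam x d) := by
  obtain ⟨K, U, hU, hF⟩ := hLip x
  exact stmt0_general hU hF (hF' x d) hxk hξk hlamk hmem

end
end

section
/- Let x̄ be feasible for (P) and let MSCQ hold at x̄. Then T_X(x̄) = T^lin_{F,Γ}(x̄) and N_X(x̄) ⊂ ∪_{λ ∈ N_Γ(F(x̄))} ∂⟨λ, F⟩(x̄). -/
open Filter Topology Metric Set
open scoped RealInnerProductSpace Pointwise

noncomputable section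

/-!
A vector `d` is tangent to `Ω` at `x` iff `infDist (x + t • d) Ω / t` tends to `0` along some
`t ↓ 0`, and metric subregularity transfers this from `Γ` to the feasible set.

For the normal cone, metric subregularity makes the residual an exact penalty: a regular normal `η`
to the feasible set at `x` satisfies `⟪η, v - x⟫ ≤ ε * ‖v - x‖ + C * infDist (F v) Γ` near `x`.
Minimizing `c * infDist (F v) Γ ^ 2 - ⟪η, v - x⟫ + 2 * ε * ‖v - x‖` for large `c` gives points `y`
close to `x` with multipliers `2 * c * (F y - z)`, where `z` is a projection of `F y` onto `Γ`.
Comparison with the value at `x` shows `c * infDist (F y) Γ ≤ C`, so the multipliers are bounded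
and have a cluster point. Replacing a multiplier by the cluster point costs at most `K` times their
distance in the subgradient inequality, and a further quadratic perturbation turns the resulting
approximate subgradients into nearby exact ones.
-/

open scoped NNReal

/-- Metric subregularity of the constraint `F y ∈ Γ` at `x` with modulus `κ`: the distance to
the feasible set is locally controlled by the residual. The non-directional `MSCQ` asserts it for
some `κ`. -/
def MetricSubregularAt {X Y : Type*} [PseudoMetricSpace X] [PseudoMetricSpace Y] (F : X → Y)
    (Γ : Set Y) (κ : ℝ≥0) (x : X) : Prop :=
  ∀ᶠ y in 𝓝 x, infDist y (F ⁻¹' Γ) ≤ κ * infDist (F y) Γ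

/-- `ζ` is a (Fréchet) `ε`-subgradient of `φ` at `y`, in the local form without a limit: the
affine minorant may be violated by at most `ε * ‖v - y‖` near `y`. -/
def IsEpsSubgradientAt {E : Type*} [NormedAddCommGroup E] [InnerProductSpace ℝ E] (ε : ℝ)
    (φ : E → ℝ) (ζ y : E) : Prop :=
  ∀ᶠ v in 𝓝 y, φ y + ⟪ζ, v - y⟫ - ε * ‖v - y‖ ≤ φ v

section Auxiliary

theorem exists_isLocalMin_mem_ball_of_le {X : Type*} [PseudoMetricSpace X] [ProperSpace X]
    {g : X → ℝ} {x : X} {R : ℝ} (hR : 0 ≤ R) (hg : ContinuousOn g (closedBall x R))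
    (hlt : ∀ v ∈ closedBall x R, g v ≤ g x → v ∈ ball x R) :
    ∃ y ∈ ball x R, g y ≤ g x ∧ IsLocalMin g y := by
  have hxR : x ∈ closedBall x R := mem_closedBall_self hR
  obtain ⟨y, hy, hmin⟩ := (isCompact_closedBall x R).exists_isMinOn ⟨x, hxR⟩ hg
  have hyR := hlt y hy (hmin hxR)
  exact ⟨y, hyR, hmin hxR, hmin.isLocalMin <|
    mem_of_superset (isOpen_ball.mem_nhds hyR) ball_subset_closedBall⟩

theorem eventually_mul_norm_sub_sq_le {E : Type*} [SeminormedAddCommGroup E] (a : ℝ) {ε : ℝ}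
    (hε : 0 < ε) (y : E) : ∀ᶠ v in 𝓝 y, a * ‖v - y‖ ^ 2 ≤ ε * ‖v - y‖ := by
  have hlim : Tendsto (fun v => a * ‖v - y‖) (𝓝 y) (𝓝 0) :=
    Continuous.tendsto' (by fun_prop) _ _ (by simp)
  filter_upwards [hlim.eventually_le_const hε] with v hv
  calc a * ‖v - y‖ ^ 2 = a * ‖v - y‖ * ‖v - y‖ := by ring
    _ ≤ ε * ‖v - y‖ := by gcongr

theorem tendsto_smul_sub_of_lipschitzOnWith {E G : Type*} [SeminormedAddCommGroup E]
    [NormedSpace ℝ E] [SeminormedAddCommGroup G] [NormedSpace ℝ G] {F : E → G} {K : ℝ≥0} {s : Set E}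
    {x d : E} {v : G} (hs : s ∈ 𝓝 x) (hF : LipschitzOnWith K F s)
    (hv : Tendsto (fun t : ℝ => t⁻¹ • (F (x + t • d) - F x)) (𝓝[>] 0) (𝓝 v))
    {dk : ℕ → E} {tk : ℕ → ℝ} (hdk : Tendsto dk atTop (𝓝 d)) (htpos : ∀ k, 0 < tk k)
    (ht0 : Tendsto tk atTop (𝓝 0)) :
    Tendsto (fun k => (tk k)⁻¹ • (F (x + tk k • dk k) - F x)) atTop (𝓝 v) := by
  have hstep {e : ℕ → E} (he : Tendsto e atTop (𝓝 d)) : ∀ᶠ k in atTop, x + tk k • e k ∈ s := by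
    have : Tendsto (fun k => x + tk k • e k) atTop (𝓝 x) := by
      simpa using (ht0.smul he).const_add x
    exact this hs
  refine (hv.comp (tendsto_nhdsWithin_iff.2 ⟨ht0, .of_forall htpos⟩)).congr_dist ?_
  refine squeeze_zero' (.of_forall fun _ => dist_nonneg) ?_
    (by simpa using (tendsto_iff_dist_tendsto_zero.1 hdk).const_mul (K : ℝ))
  filter_upwards [hstep hdk, hstep tendsto_const_nhds] with k hk hk'
  have hlip := hF.dist_le_mul _ hk' _ hk
  rw [dist_add_left, dist_smul₀, Real.norm_of_nonneg (htpos k).le, dist_comm d] at hlip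
  rw [Function.comp_apply, dist_smul₀, dist_sub_right, norm_inv,
    Real.norm_of_nonneg (htpos k).le, inv_mul_le_iff₀ (htpos k)]
  linarith

end Auxiliary

section TangentCone

variable {E G : Type*} [NormedAddCommGroup E] [InnerProductSpace ℝ E]
  [NormedAddCommGroup G] [InnerProductSpace ℝ G]

theorem mem_tanCone_iff_tendsto_infDist {Ω : Set E} {x d : E} :
    d ∈ tanCone Ω x ↔ x ∈ Ω ∧ ∃ tk : ℕ → ℝ, (∀ k, 0 < tk k) ∧ Tendsto tk atTop (𝓝 0) ∧
      Tendsto (fun k => (tk k)⁻¹ * infDist (x + tk k • d) Ω) atTop (𝓝 0) := by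
  constructor
  · rintro ⟨hx, dk, tk, hdk, htpos, ht0, hmem⟩
    refine ⟨hx, tk, htpos, ht0, squeeze_zero (fun k => ?_) (fun k => ?_)
      (tendsto_iff_norm_sub_tendsto_zero.1 hdk)⟩
    · exact mul_nonneg (inv_nonneg.2 (htpos k).le) infDist_nonneg
    · rw [inv_mul_le_iff₀ (htpos k)]
      calc infDist (x + tk k • d) Ω ≤ dist (x + tk k • d) (x + tk k • dk k) :=
            infDist_le_dist_of_mem (hmem k)
        _ = tk k * ‖dk k - d‖ := by
            rw [dist_add_left, dist_comm, dist_smul₀, dist_eq_norm,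
              Real.norm_of_nonneg (htpos k).le]
  · rintro ⟨hx, tk, htpos, ht0, hlim⟩
    have hnear (k : ℕ) :
        ∃ z ∈ Ω, dist (x + tk k • d) z < infDist (x + tk k • d) Ω + tk k * tk k :=
      (infDist_lt_iff ⟨x, hx⟩).1 (lt_add_of_pos_right _ (mul_pos (htpos k) (htpos k)))
    choose z hzΩ hz using hnear
    refine ⟨hx, fun k => (tk k)⁻¹ • (z k - x), tk, ?_, htpos, ht0, fun k => ?_⟩
    · rw [tendsto_iff_norm_sub_tendsto_zero]
      refine squeeze_zero (fun _ => norm_nonneg _) (fun k => ?_) (by simpa using hlim.add ht0)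
      have hdir : (tk k)⁻¹ • (z k - x) - d = (tk k)⁻¹ • (z k - (x + tk k • d)) := by
        rw [← sub_sub, smul_sub _ (z k - x), inv_smul_smul₀ (htpos k).ne']
      rw [hdir, norm_smul, norm_inv, Real.norm_of_nonneg (htpos k).le, ← dist_eq_norm, dist_comm,
        inv_mul_le_iff₀ (htpos k), mul_add, mul_inv_cancel_left₀ (htpos k).ne']
      exact (hz k).le
    · rw [smul_inv_smul₀ (htpos k).ne', add_sub_cancel]
      exact hzΩ k

theorem mem_tanCone_of_mem_tanCone_preimage {F : E → G} {K : ℝ≥0} {s : Set E} {Γ : Set G}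
    {x d : E} {v : G} (hs : s ∈ 𝓝 x) (hF : LipschitzOnWith K F s)
    (hv : Tendsto (fun t : ℝ => t⁻¹ • (F (x + t • d) - F x)) (𝓝[>] 0) (𝓝 v))
    (hd : d ∈ tanCone (F ⁻¹' Γ) x) : v ∈ tanCone Γ (F x) := by
  obtain ⟨hx, dk, tk, hdk, htpos, ht0, hmem⟩ := hd
  refine ⟨hx, _, tk, tendsto_smul_sub_of_lipschitzOnWith hs hF hv hdk htpos ht0, htpos, ht0,
    fun k => ?_⟩
  rw [smul_inv_smul₀ (htpos k).ne', add_sub_cancel]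
  exact hmem k

theorem MetricSubregularAt.mem_tanCone_preimage {F : E → G} {Γ : Set G} {κ : ℝ≥0} {x d : E}
    {v : G} (hsub : MetricSubregularAt F Γ κ x)
    (hv : Tendsto (fun t : ℝ => t⁻¹ • (F (x + t • d) - F x)) (𝓝[>] 0) (𝓝 v))
    (hvΓ : v ∈ tanCone Γ (F x)) : d ∈ tanCone (F ⁻¹' Γ) x := by
  rw [mem_tanCone_iff_tendsto_infDist] at hvΓ ⊢
  obtain ⟨hx, tk, htpos, ht0, hdist⟩ := hvΓ
  refine ⟨hx, tk, htpos, ht0, ?_⟩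
  have hquot : Tendsto (fun k => (tk k)⁻¹ • (F (x + tk k • d) - F x)) atTop (𝓝 v) :=
    hv.comp (tendsto_nhdsWithin_iff.2 ⟨ht0, .of_forall htpos⟩)
  have hline : Tendsto (fun k => x + tk k • d) atTop (𝓝 x) := by
    simpa using (ht0.smul_const d).const_add x
  refine squeeze_zero' (.of_forall fun k => mul_nonneg (inv_nonneg.2 (htpos k).le) infDist_nonneg)
    ?_ (by simpa using (hdist.add (tendsto_iff_dist_tendsto_zero.1 hquot)).const_mul (κ : ℝ))
  filter_upwards [hline.eventually hsub] with k hk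
  have hres : dist (F (x + tk k • d)) (F x + tk k • v) =
      tk k * dist ((tk k)⁻¹ • (F (x + tk k • d) - F x)) v := by
    have hscale := dist_smul₀ (tk k) ((tk k)⁻¹ • (F (x + tk k • d) - F x)) v
    rw [Real.norm_of_nonneg (htpos k).le, smul_inv_smul₀ (htpos k).ne'] at hscale
    rw [← hscale, ← dist_add_left (F x) (_ - _), add_sub_cancel]
  rw [inv_mul_le_iff₀ (htpos k)]
  calc infDist (x + tk k • d) (F ⁻¹' Γ) ≤ κ * infDist (F (x + tk k • d)) Γ := hk
    _ ≤ κ * (infDist (F x + tk k • v) Γ + dist (F (x + tk k • d)) (F x + tk k • v)) := by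
        gcongr; exact infDist_le_infDist_add_dist
    _ = tk k * (κ * ((tk k)⁻¹ * infDist (F x + tk k • v) Γ +
          dist ((tk k)⁻¹ • (F (x + tk k • d) - F x)) v)) := by
        rw [hres]; field_simp [(htpos k).ne']

end TangentCone

section NormalCones

variable {H : Type*} [NormedAddCommGroup H] [InnerProductSpace ℝ H] {Ω : Set H} {z η : H}

theorem mem_regNormal_of_eventually_inner_le (hz : z ∈ Ω)
    (h : ∀ ε > 0, ∀ᶠ p in 𝓝[Ω] z, ⟪η, p - z⟫ ≤ ε * ‖p - z‖) : η ∈ regNormal Ω z := by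
  refine ⟨hz, ?_⟩
  rintro d ⟨-, dk, tk, hdk, htpos, ht0, hmem⟩
  have hz' : Tendsto (fun k => z + tk k • dk k) atTop (𝓝[Ω] z) :=
    tendsto_nhdsWithin_iff.2 ⟨by simpa using (ht0.smul hdk).const_add z, .of_forall hmem⟩
  have hle (ε : ℝ) (hε : 0 < ε) : ⟪d, η⟫ ≤ ε * ‖d‖ := by
    refine le_of_tendsto_of_tendsto (hdk.inner tendsto_const_nhds) (hdk.norm.const_mul ε) ?_
    filter_upwards [hz'.eventually (h ε hε)] with k hk
    rw [add_sub_cancel_left, real_inner_smul_right, norm_smul, Real.norm_of_nonneg (htpos k).le,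
      real_inner_comm, mul_left_comm] at hk
    exact le_of_mul_le_mul_left hk (htpos k)
  have hlim : Tendsto (fun ε : ℝ => ε * ‖d‖) (𝓝[>] 0) (𝓝 0) :=
    (Continuous.tendsto' (by fun_prop) 0 0 (by simp)).mono_left nhdsWithin_le_nhds
  exact ge_of_tendsto hlim (eventually_mem_nhdsWithin.mono hle)

theorem eventually_inner_le_of_mem_regNormal [FiniteDimensional ℝ H] (hη : η ∈ regNormal Ω z)
    {ε : ℝ} (hε : 0 < ε) : ∀ᶠ p in 𝓝[Ω] z, ⟪η, p - z⟫ ≤ ε * ‖p - z‖ := by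
  by_contra! hfreq
  obtain ⟨p, hpz, hp⟩ := exists_seq_forall_of_frequently
    (hfreq.and_eventually eventually_mem_nhdsWithin)
  have hpos (k : ℕ) : 0 < ‖p k - z‖ := by
    refine norm_pos_iff.2 fun h0 => ?_
    simpa [h0] using (hp k).1
  have hunit (k : ℕ) : ‖p k - z‖⁻¹ • (p k - z) ∈ sphere (0 : H) 1 := by
    rw [mem_sphere_zero_iff_norm, norm_smul, norm_inv, norm_norm, inv_mul_cancel₀ (hpos k).ne']
  obtain ⟨d, -, g, hg, hd⟩ := (isCompact_sphere (0 : H) 1).tendsto_subseq hunit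
  have hdist : Tendsto (fun k => ‖p (g k) - z‖) atTop (𝓝 0) :=
    (tendsto_iff_norm_sub_tendsto_zero.1 (tendsto_nhds_of_tendsto_nhdsWithin hpz)).comp
      hg.tendsto_atTop
  have hdtan : d ∈ tanCone Ω z := by
    refine ⟨hη.1, _, _, hd, fun k => hpos (g k), hdist, fun k => ?_⟩
    rw [Function.comp_apply, smul_inv_smul₀ (hpos _).ne', add_sub_cancel]
    exact (hp _).2
  have hεd : ε ≤ ⟪d, η⟫ := by
    refine ge_of_tendsto' (hd.inner tendsto_const_nhds) fun k => ?_
    rw [Function.comp_apply, real_inner_smul_left, real_inner_comm, le_inv_mul_iff₀ (hpos _),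
      mul_comm]
    exact (hp _).1.le
  exact (hη.2 d hdtan).not_gt (hε.trans_le hεd)

theorem smul_sub_mem_regNormal_of_infDist_eq_dist {w : H} (hz : z ∈ Ω)
    (hproj : infDist w Ω = dist w z) {c : ℝ} (hc : 0 ≤ c) : c • (w - z) ∈ regNormal Ω z := by
  refine mem_regNormal_of_eventually_inner_le hz fun ε hε => ?_
  filter_upwards [nhdsWithin_le_nhds (eventually_mul_norm_sub_sq_le (c / 2) hε z),
    self_mem_nhdsWithin] with p hp hpΩ
  have hnear : ‖w - z‖ ≤ ‖(w - z) - (p - z)‖ := by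
    rw [sub_sub_sub_cancel_right, ← dist_eq_norm, ← dist_eq_norm, ← hproj]
    exact infDist_le_dist_of_mem hpΩ
  have hsq : 2 * ⟪w - z, p - z⟫ ≤ ‖p - z‖ ^ 2 := by
    have := pow_le_pow_left₀ (norm_nonneg _) hnear 2
    rw [norm_sub_sq_real (w - z) (p - z)] at this
    linarith
  calc ⟪c • (w - z), p - z⟫ = c / 2 * (2 * ⟪w - z, p - z⟫) := by
        rw [real_inner_smul_left]; ring
    _ ≤ c / 2 * ‖p - z‖ ^ 2 := by gcongr
    _ ≤ ε * ‖p - z‖ := hp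

theorem eventually_inner_le_add_infDist (hz : z ∈ Ω) {ε : ℝ} (hε : 0 < ε)
    (h : ∀ᶠ p in 𝓝[Ω] z, ⟪η, p - z⟫ ≤ ε * ‖p - z‖) :
    ∀ᶠ y in 𝓝 z, ⟪η, y - z⟫ ≤ ε * ‖y - z‖ + (‖η‖ + ε) * infDist y Ω := by
  obtain ⟨ρ, hρ, hball⟩ := nhdsWithin_basis_ball.eventually_iff.1 h
  filter_upwards [ball_mem_nhds z (half_pos hρ)] with y hy
  rw [mem_ball_iff_norm] at hy
  have hC : 0 < ‖η‖ + ε := by positivity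
  rw [← sub_le_iff_le_add', ← div_le_iff₀' hC, le_infDist ⟨z, hz⟩]
  intro p hp
  rw [div_le_iff₀' hC, dist_eq_norm, sub_le_iff_le_add']
  rcases lt_or_ge ‖p - z‖ ρ with hpz | hpz
  · have hsplit : ⟪η, y - z⟫ = ⟪η, y - p⟫ + ⟪η, p - z⟫ := by
      rw [← inner_add_right, sub_add_sub_cancel]
    have htri : ‖p - z‖ ≤ ‖y - p‖ + ‖y - z‖ := by
      simpa only [norm_sub_rev y p] using norm_sub_le_norm_sub_add_norm_sub p y z
    calc ⟪η, y - z⟫ ≤ ‖η‖ * ‖y - p‖ + ε * ‖p - z‖ :=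
          hsplit.trans_le (add_le_add (real_inner_le_norm _ _)
            (hball ⟨mem_ball_iff_norm.2 hpz, hp⟩))
      _ ≤ ‖η‖ * ‖y - p‖ + ε * (‖y - p‖ + ‖y - z‖) := by gcongr
      _ = ε * ‖y - z‖ + (‖η‖ + ε) * ‖y - p‖ := by ring
  · have hfar : ‖y - z‖ ≤ ‖y - p‖ := by
      have := norm_sub_le_norm_sub_add_norm_sub p y z
      rw [norm_sub_rev p y] at this
      linarith
    calc ⟪η, y - z⟫ ≤ ‖η‖ * ‖y - z‖ := real_inner_le_norm _ _
      _ ≤ ‖η‖ * ‖y - p‖ := by gcongr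
      _ ≤ ε * ‖y - z‖ + (‖η‖ + ε) * ‖y - p‖ := by
          have : 0 ≤ ε * ‖y - z‖ + ε * ‖y - p‖ := by positivity
          linarith

theorem mem_limNormal_of_tendsto (hz : z ∈ Ω) {zk ηk : ℕ → H} (hzk : Tendsto zk atTop (𝓝 z))
    (hηk : Tendsto ηk atTop (𝓝 η)) (hreg : ∀ᶠ k in atTop, ηk k ∈ regNormal Ω (zk k)) :
    η ∈ limNormal Ω z := by
  obtain ⟨g, hg, hreg⟩ := extraction_of_eventually_atTop hreg
  exact ⟨hz, zk ∘ g, ηk ∘ g, hzk.comp hg.tendsto_atTop, hηk.comp hg.tendsto_atTop, hreg⟩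

end NormalCones

section Subgradients

variable {E G : Type*} [NormedAddCommGroup E] [InnerProductSpace ℝ E]
  [NormedAddCommGroup G] [InnerProductSpace ℝ G] {φ : E → ℝ} {s : Set E} {x y ζ : E} {ε : ℝ}

theorem pl2_mem_regNormal_epigraphSet (h : ∀ ε > 0, IsEpsSubgradientAt ε φ ζ y) :
    pl2 ζ (-1) ∈ regNormal (epigraphSet φ) (pl2 y (φ y)) := by
  refine mem_regNormal_of_eventually_inner_le (show φ y ≤ φ y from le_rfl) fun ε hε => ?_
  have hfst : Tendsto WithLp.fst (𝓝[epigraphSet φ] (pl2 y (φ y))) (𝓝 y) :=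
    (WithLp.continuous_fst 2 E ℝ).continuousAt.mono_left nhdsWithin_le_nhds
  filter_upwards [hfst.eventually (h ε hε), self_mem_nhdsWithin] with p hp hpφ
  have hepi : φ p.fst ≤ p.snd := hpφ
  calc ⟪pl2 ζ (-1), p - pl2 y (φ y)⟫ = ⟪ζ, p.fst - y⟫ - (p.snd - φ y) := by
        simp [WithLp.prod_inner_apply, pl2, sub_eq_add_neg]
    _ ≤ ε * ‖(p - pl2 y (φ y)).fst‖ := by
        change _ ≤ ε * ‖p.fst - y‖
        linarith
    _ ≤ ε * ‖p - pl2 y (φ y)‖ := by gcongr; exact WithLp.norm_fst_le E _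

theorem IsEpsSubgradientAt.inner_change_multiplier {F : E → G} {K : ℝ≥0} {lam μ : G}
    (hs : s ∈ 𝓝 y) (hF : LipschitzOnWith K F s)
    (h : IsEpsSubgradientAt ε (fun v => ⟪lam, F v⟫) ζ y) :
    IsEpsSubgradientAt (ε + ‖lam - μ‖ * K) (fun v => ⟪μ, F v⟫) ζ y := by
  filter_upwards [h, hs] with v hv hvs
  have hlip : ⟪lam - μ, F v - F y⟫ ≤ ‖lam - μ‖ * (K * ‖v - y‖) :=
    (real_inner_le_norm _ _).trans <| by
      gcongr; exact hF.norm_sub_le hvs (mem_of_mem_nhds hs)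
  simp only [inner_sub_left, inner_sub_right] at hlip
  linarith

theorem IsEpsSubgradientAt.inner_of_mul_infDist_sq {F : E → G} {K : ℝ≥0} {Γ : Set G} {z : G}
    {a c : ℝ} (hs : s ∈ 𝓝 y) (hF : LipschitzOnWith K F s) (hz : z ∈ Γ)
    (hproj : infDist (F y) Γ = dist (F y) z) (hc : 0 ≤ c)
    (h : IsEpsSubgradientAt a (fun v => c * infDist (F v) Γ ^ 2) ζ y) (hε : 0 < ε) :
    IsEpsSubgradientAt (a + ε) (fun v => ⟪(2 * c) • (F y - z), F v⟫) ζ y := by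
  filter_upwards [h, hs, eventually_mul_norm_sub_sq_le (c * (K : ℝ) ^ 2) hε y] with v hv hvs hquad
  have hexpand : ‖F v - z‖ ^ 2 =
      ‖F y - z‖ ^ 2 + 2 * ⟪F y - z, F v - F y⟫ + ‖F v - F y‖ ^ 2 := by
    rw [← norm_add_sq_real, add_comm, sub_add_sub_cancel]
  have hupper : c * infDist (F v) Γ ^ 2 ≤
      c * infDist (F y) Γ ^ 2 + 2 * c * ⟪F y - z, F v - F y⟫ + ε * ‖v - y‖ :=
    calc c * infDist (F v) Γ ^ 2 ≤ c * ‖F v - z‖ ^ 2 := by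
          gcongr
          · exact infDist_nonneg
          · exact (infDist_le_dist_of_mem hz).trans_eq (dist_eq_norm _ _)
      _ = c * infDist (F y) Γ ^ 2 + 2 * c * ⟪F y - z, F v - F y⟫ + c * ‖F v - F y‖ ^ 2 := by
          rw [hexpand, hproj, dist_eq_norm]; ring
      _ ≤ c * infDist (F y) Γ ^ 2 + 2 * c * ⟪F y - z, F v - F y⟫ +
            c * (K * ‖v - y‖) ^ 2 := by
          gcongr; exact hF.norm_sub_le hvs (mem_of_mem_nhds hs)
      _ ≤ c * infDist (F y) Γ ^ 2 + 2 * c * ⟪F y - z, F v - F y⟫ + ε * ‖v - y‖ := by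
          linarith
  rw [inner_sub_right] at hupper
  simp only [real_inner_smul_left]
  linarith

variable [FiniteDimensional ℝ E]

theorem frequently_isEpsSubgradientAt_mul_sq {ψ : E → ℝ} {η : E} {C : ℝ} (hs : s ∈ 𝓝 x)
    (hψ : ContinuousOn ψ s) (hψ0 : ∀ v, 0 ≤ ψ v) (hψx : ψ x = 0) (hC : 0 ≤ C) (hε : 0 < ε)
    (h : ∀ᶠ v in 𝓝 x, ⟪η, v - x⟫ ≤ ε * ‖v - x‖ + C * ψ v) :
    ∃ᶠ y in 𝓝 x, ∃ c ≥ 0, c * ψ y ≤ C ∧ IsEpsSubgradientAt (2 * ε) (fun v => c * ψ v ^ 2) η y := by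
  refine frequently_iff.2 fun {U} hU => ?_
  obtain ⟨R, hR, hball⟩ := nhds_basis_closedBall.mem_iff.1 (inter_mem hU (inter_mem hs h))
  -- any `c > C ^ 2 / (ε * R)` keeps the minimizer inside the ball
  set c := (C ^ 2 + 1) / (ε * R) with hc
  have hc0 : 0 < c := by positivity
  let g : E → ℝ := fun v => c * ψ v ^ 2 - ⟪η, v - x⟫ + 2 * ε * ‖v - x‖
  have hgx : g x = 0 := by simp [g, hψx]
  have hg : ContinuousOn g (closedBall x R) := by
    have := hψ.mono fun v hv => (hball hv).2.1
    fun_prop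
  have hpen {v : E} (hv : v ∈ closedBall x R) (hgv : g v ≤ g x) :
      ε * ‖v - x‖ + c * ψ v ^ 2 ≤ C * ψ v := by
    have : ⟪η, v - x⟫ ≤ ε * ‖v - x‖ + C * ψ v := (hball hv).2.2
    simp only [hgx, g] at hgv
    linarith
  have hψv {v : E} (hv : v ∈ closedBall x R) (hgv : g v ≤ g x) : c * ψ v ≤ C := by
    rcases (hψ0 v).eq_or_lt with h0 | hpos
    · simpa [← h0] using hC
    · have := hpen hv hgv
      have : 0 ≤ ε * ‖v - x‖ := by positivity
      exact le_of_mul_le_mul_right (by linarith) hpos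
  have hlt {v : E} (hv : v ∈ closedBall x R) (hgv : g v ≤ g x) : v ∈ ball x R := by
    rw [mem_ball_iff_norm]
    refine lt_of_mul_lt_mul_left ?_ (mul_pos hc0 hε).le
    have hsq : c * (C * ψ v) ≤ C ^ 2 := by nlinarith [hψv hv hgv]
    have hcR : c * ε * R = C ^ 2 + 1 := by rw [hc]; field_simp
    nlinarith [hpen hv hgv, sq_nonneg (c * ψ v)]
  obtain ⟨y, hyR, hgy, hmin⟩ := exists_isLocalMin_mem_ball_of_le hR.le hg fun v => hlt
  have hy := ball_subset_closedBall hyR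
  refine ⟨y, (hball hy).1, c, hc0.le, hψv hy hgy, hmin.mono fun v hv => ?_⟩
  have htri := mul_le_mul_of_nonneg_left (norm_sub_le_norm_sub_add_norm_sub v y x)
    (by positivity : 0 ≤ 2 * ε)
  have hinner : ⟪η, v - x⟫ = ⟪η, v - y⟫ + ⟪η, y - x⟫ := by
    rw [← inner_add_right, sub_add_sub_cancel]
  simp only [g] at hv
  linarith

theorem IsEpsSubgradientAt.frequently_forall_pos (h : IsEpsSubgradientAt ε φ ζ y) (hε : 0 ≤ ε)
    (hs : s ∈ 𝓝 y) (hφ : ContinuousOn φ s) :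
    ∃ᶠ y₁ in 𝓝 y, ∃ ζ₁, ‖ζ₁ - ζ‖ ≤ 2 * ε ∧ ∀ ε' > 0, IsEpsSubgradientAt ε' φ ζ₁ y₁ := by
  refine frequently_iff.2 fun {U} hU => ?_
  obtain ⟨R, hR, hball⟩ := nhds_basis_closedBall.mem_iff.1 (inter_mem hU (inter_mem hs h))
  set c := (ε + 1) / R with hc
  have hc0 : 0 < c := by positivity
  let g : E → ℝ := fun v => φ v - ⟪ζ, v - y⟫ + c * ‖v - y‖ ^ 2
  have hg : ContinuousOn g (closedBall y R) := by
    have := hφ.mono fun v hv => (hball hv).2.1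
    fun_prop
  have hclose {v : E} (hv : v ∈ closedBall y R) (hgv : g v ≤ g y) : c * ‖v - y‖ ≤ ε := by
    have hsub : φ y + ⟪ζ, v - y⟫ - ε * ‖v - y‖ ≤ φ v := (hball hv).2.2
    simp only [g, sub_self, inner_zero_right, norm_zero] at hgv
    rcases (norm_nonneg (v - y)).eq_or_lt with h0 | hpos
    · simpa [← h0] using hε
    · exact le_of_mul_le_mul_right (by linarith) hpos
  have hlt {v : E} (hv : v ∈ closedBall y R) (hgv : g v ≤ g y) : v ∈ ball y R := by
    rw [mem_ball_iff_norm]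
    refine lt_of_mul_lt_mul_left ((hclose hv hgv).trans_lt ?_) hc0.le
    rw [hc, div_mul_cancel₀ _ hR.ne']
    exact lt_add_one ε
  obtain ⟨y₁, hyR, hgy, hmin⟩ := exists_isLocalMin_mem_ball_of_le hR.le hg fun v => hlt
  have hy := ball_subset_closedBall hyR
  refine ⟨y₁, (hball hy).1, ζ - (2 * c) • (y₁ - y), ?_, fun ε' hε' => ?_⟩
  · rw [sub_sub_cancel_left, norm_neg, norm_smul, Real.norm_of_nonneg (by positivity)]
    linarith [hclose hy hgy]
  · filter_upwards [hmin, eventually_mul_norm_sub_sq_le c hε' y₁] with v hv hquad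
    have hexpand : ‖v - y‖ ^ 2 = ‖y₁ - y‖ ^ 2 + 2 * ⟪y₁ - y, v - y₁⟫ + ‖v - y₁‖ ^ 2 := by
      rw [← norm_add_sq_real, add_comm, sub_add_sub_cancel]
    have hinner : ⟪ζ, v - y⟫ = ⟪ζ, v - y₁⟫ + ⟪ζ, y₁ - y⟫ := by
      rw [← inner_add_right, sub_add_sub_cancel]
    simp only [g] at hv
    rw [hexpand, hinner] at hv
    rw [inner_sub_left, real_inner_smul_left]
    linarith

theorem mem_limSubdiff_of_tendsto {ξ : E} (hs : s ∈ 𝓝 x) (hφ : ContinuousOn φ s) {yk ζk : ℕ → E}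
    {εk : ℕ → ℝ} (hyk : Tendsto yk atTop (𝓝 x)) (hζk : Tendsto ζk atTop (𝓝 ξ))
    (hεk : Tendsto εk atTop (𝓝 0)) (hεk0 : ∀ k, 0 ≤ εk k)
    (h : ∀ᶠ k in atTop, IsEpsSubgradientAt (εk k) φ (ζk k) (yk k)) : ξ ∈ limSubdiff φ x := by
  have hnear : ∀ᶠ k in atTop, ∃ p : E × E, dist p.1 (yk k) < 1 / ((k : ℝ) + 1) ∧
      ‖p.2 - ζk k‖ ≤ 2 * εk k ∧ ∀ ε > 0, IsEpsSubgradientAt ε φ p.2 p.1 := by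
    filter_upwards [h, hyk.eventually (eventually_mem_nhds_iff.2 hs)] with k hk hks
    obtain ⟨y₁, ⟨ζ₁, hζ₁, hsub⟩, hy₁⟩ := ((hk.frequently_forall_pos (hεk0 k) hks hφ).and_eventually
      (ball_mem_nhds (yk k) (Nat.one_div_pos_of_nat (n := k)))).exists
    exact ⟨(y₁, ζ₁), hy₁, hζ₁, hsub⟩
  obtain ⟨p, hp⟩ := hnear.choice
  have hfst : Tendsto (fun k => (p k).1) atTop (𝓝 x) := by
    refine hyk.congr_dist (squeeze_zero' (.of_forall fun _ => dist_nonneg) ?_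
      tendsto_one_div_add_atTop_nhds_zero_nat)
    filter_upwards [hp] with k hk
    exact (dist_comm _ _).trans_le hk.1.le
  have hsnd : Tendsto (fun k => (p k).2) atTop (𝓝 ξ) := by
    refine hζk.congr_dist (squeeze_zero' (.of_forall fun _ => dist_nonneg) ?_
      (by simpa using hεk.const_mul 2))
    filter_upwards [hp] with k hk
    rw [dist_comm, dist_eq_norm]
    exact hk.2.1
  have hpl : Continuous fun q : E × ℝ => pl2 q.1 q.2 := WithLp.prod_continuous_toLp 2 E ℝ
  have hφx : Tendsto (fun k => φ (p k).1) atTop (𝓝 (φ x)) := (hφ.continuousAt hs).tendsto.comp hfst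
  exact mem_limNormal_of_tendsto (show φ x ≤ φ x from le_rfl)
    ((hpl.tendsto (x, φ x)).comp (hfst.prodMk_nhds hφx))
    ((hpl.tendsto (ξ, -1)).comp (hsnd.prodMk_nhds tendsto_const_nhds))
    (hp.mono fun k hk => pl2_mem_regNormal_epigraphSet hk.2.2)

end Subgradients

section Multipliers

variable {E G : Type*} [NormedAddCommGroup E] [InnerProductSpace ℝ E] [FiniteDimensional ℝ E]
  [NormedAddCommGroup G] [InnerProductSpace ℝ G] [FiniteDimensional ℝ G]
  {F : E → G} {K κ : ℝ≥0} {s : Set E} {Γ : Set G} {x : E}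

theorem MetricSubregularAt.frequently_approx_multiplier {η : E} {ε : ℝ}
    (hsub : MetricSubregularAt F Γ κ x) (hs : s ∈ 𝓝 x) (hF : LipschitzOnWith K F s)
    (hΓ : IsClosed Γ) (hη : η ∈ regNormal (F ⁻¹' Γ) x) (hε : 0 < ε) :
    ∃ᶠ y in 𝓝 x, ∃ z, ∃ lam ∈ regNormal Γ z, dist z (F x) ≤ 2 * dist (F y) (F x) ∧
      ‖lam‖ ≤ 2 * ((‖η‖ + ε) * κ) ∧ IsEpsSubgradientAt (3 * ε) (fun v => ⟪lam, F v⟫) η y := by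
  have hx : F x ∈ Γ := hη.1
  have hpen : ∀ᶠ v in 𝓝 x, ⟪η, v - x⟫ ≤ ε * ‖v - x‖ + (‖η‖ + ε) * κ * infDist (F v) Γ := by
    filter_upwards [hsub, eventually_inner_le_add_infDist hη.1 hε
      (eventually_inner_le_of_mem_regNormal hη hε)] with v hvsub hv
    refine hv.trans ?_
    rw [mul_assoc]
    gcongr
  have hcont : ContinuousOn (fun v => infDist (F v) Γ) s :=
    (continuous_infDist_pt Γ).comp_continuousOn hF.continuousOn
  refine ((frequently_isEpsSubgradientAt_mul_sq hs hcont (fun _ => infDist_nonneg)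
    (infDist_zero_of_mem hx) (by positivity) hε hpen).and_eventually
    (eventually_mem_nhds_iff.2 hs)).mono ?_
  rintro y ⟨⟨c, hc, hcC, hy⟩, hys⟩
  obtain ⟨z, hz, hproj⟩ := hΓ.exists_infDist_eq_dist ⟨F x, hx⟩ (F y)
  refine ⟨z, (2 * c) • (F y - z),
    smul_sub_mem_regNormal_of_infDist_eq_dist hz hproj (by positivity), ?_, ?_, ?_⟩
  · have hle : dist z (F y) ≤ dist (F y) (F x) := by
      rw [dist_comm, ← hproj]
      exact infDist_le_dist_of_mem hx
    linarith [dist_triangle z (F y) (F x)]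
  · rw [norm_smul, Real.norm_of_nonneg (by positivity), ← dist_eq_norm, ← hproj, mul_assoc]
    gcongr
  · convert hy.inner_of_mul_infDist_sq hys hF hz hproj hc hε using 1
    ring

theorem MetricSubregularAt.exists_tendsto_approx_multipliers {η : E}
    (hsub : MetricSubregularAt F Γ κ x) (hs : s ∈ 𝓝 x) (hF : LipschitzOnWith K F s)
    (hΓ : IsClosed Γ) (hη : η ∈ limNormal (F ⁻¹' Γ) x) :
    ∃ (yk ηk : ℕ → E) (zk lamk : ℕ → G) (εk : ℕ → ℝ), Tendsto yk atTop (𝓝 x) ∧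
      Tendsto ηk atTop (𝓝 η) ∧ Tendsto zk atTop (𝓝 (F x)) ∧ Tendsto εk atTop (𝓝 0) ∧
      (∀ k, 0 ≤ εk k) ∧ (∃ M, ∀ᶠ k in atTop, ‖lamk k‖ ≤ M) ∧ ∀ᶠ k in atTop,
        lamk k ∈ regNormal Γ (zk k) ∧
        IsEpsSubgradientAt (εk k) (fun v => ⟪lamk k, F v⟫) (ηk k) (yk k) := by
  obtain ⟨-, xk, ηk, hxk, hηk, hreg⟩ := hη
  have hFx : ContinuousAt F x := hF.continuousOn.continuousAt hs
  let δ : ℕ → ℝ := fun k => 1 / ((k : ℝ) + 1)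
  have hδ : Tendsto δ atTop (𝓝 0) := tendsto_one_div_add_atTop_nhds_zero_nat
  have hδ0 (k : ℕ) : 0 < δ k := Nat.one_div_pos_of_nat
  have happrox : ∀ᶠ k in atTop, ∃ q : E × G × G, dist q.1 (xk k) < δ k ∧
      q.2.2 ∈ regNormal Γ q.2.1 ∧ dist q.2.1 (F (xk k)) ≤ 2 * dist (F q.1) (F (xk k)) ∧
      ‖q.2.2‖ ≤ 2 * ((‖ηk k‖ + δ k) * κ) ∧
      IsEpsSubgradientAt (3 * δ k) (fun v => ⟪q.2.2, F v⟫) (ηk k) q.1 := by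
    filter_upwards [hxk.eventually hsub.eventually_nhds,
      hxk.eventually (eventually_mem_nhds_iff.2 hs)] with k hksub hks
    have hfreq := MetricSubregularAt.frequently_approx_multiplier hksub hks hF hΓ (hreg k) (hδ0 k)
    obtain ⟨y, ⟨z, lam, hlam, hz, hbound, hy⟩, hyδ⟩ :=
      (hfreq.and_eventually (ball_mem_nhds (xk k) (hδ0 k))).exists
    exact ⟨(y, z, lam), hyδ, hlam, hz, hbound, hy⟩
  obtain ⟨q, hq⟩ := happrox.choice
  have hyk : Tendsto (fun k => (q k).1) atTop (𝓝 x) :=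
    hxk.congr_dist (squeeze_zero' (.of_forall fun _ => dist_nonneg)
      (hq.mono fun k hk => (dist_comm _ _).trans_le hk.1.le) hδ)
  have hFdist : Tendsto (fun k => dist (F (q k).1) (F (xk k))) atTop (𝓝 0) := by
    simpa using (hFx.tendsto.comp hyk).dist (hFx.tendsto.comp hxk)
  have hzk : Tendsto (fun k => (q k).2.1) atTop (𝓝 (F x)) :=
    (hFx.tendsto.comp hxk).congr_dist (squeeze_zero' (.of_forall fun _ => dist_nonneg)
      (hq.mono fun k hk => (dist_comm _ _).trans_le hk.2.2.1) (by simpa using hFdist.const_mul 2))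
  obtain ⟨M, hM⟩ := (((hηk.norm.add hδ).mul_const (κ : ℝ)).const_mul 2).bddAbove_range
  exact ⟨_, ηk, _, fun k => (q k).2.2, fun k => 3 * δ k, hyk, hηk, hzk,
    by simpa using hδ.const_mul 3, fun k => by have := hδ0 k; positivity,
    ⟨M, hq.mono fun k hk => hk.2.2.2.1.trans (hM ⟨k, rfl⟩)⟩,
    hq.mono fun k hk => ⟨hk.2.1, hk.2.2.2.2⟩⟩

theorem MetricSubregularAt.limNormal_preimage_subset (hsub : MetricSubregularAt F Γ κ x)
    (hs : s ∈ 𝓝 x) (hF : LipschitzOnWith K F s) (hΓ : IsClosed Γ) :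
    limNormal (F ⁻¹' Γ) x ⊆
      {ξ | ∃ lam ∈ limNormal Γ (F x), ξ ∈ limSubdiff (fun y => ⟪lam, F y⟫) x} := by
  intro η hη
  obtain ⟨yk, ηk, zk, lamk, εk, hyk, hηk, hzk, hεk, hεk0, ⟨M, hM⟩, hmult⟩ :=
    hsub.exists_tendsto_approx_multipliers hs hF hΓ hη
  obtain ⟨lam, -, g, hg, hlam⟩ := (isCompact_closedBall (0 : G) M).tendsto_subseq'
    (hM.frequently.mono fun k hk => mem_closedBall_zero_iff.2 hk)
  have hg := hg.tendsto_atTop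
  have hmult := hg.eventually hmult
  refine ⟨lam, mem_limNormal_of_tendsto hη.1 (hzk.comp hg) hlam (hmult.mono fun _ h => h.1), ?_⟩
  have hφ : ContinuousOn (fun v => ⟪lam, F v⟫) s := continuousOn_const.inner hF.continuousOn
  refine mem_limSubdiff_of_tendsto (εk := fun k => εk (g k) + ‖lamk (g k) - lam‖ * K) hs hφ
    (hyk.comp hg) (hηk.comp hg) ?_
    (fun k => add_nonneg (hεk0 _) (by positivity)) ?_
  · simpa using (hεk.comp hg).add ((tendsto_iff_norm_sub_tendsto_zero.1 hlam).mul_const (K : ℝ))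
  · filter_upwards [hmult, (hyk.comp hg).eventually (eventually_mem_nhds_iff.2 hs)] with k hk hks
    exact hk.2.inner_change_multiplier hks hF

theorem stmt6_general {F' : E → G} (hs : s ∈ 𝓝 x) (hF : LipschitzOnWith K F s)
    (hF' : ∀ d, Tendsto (fun t : ℝ => t⁻¹ • (F (x + t • d) - F x)) (𝓝[>] 0) (𝓝 (F' d)))
    (hΓ : IsClosed Γ) (hsub : MetricSubregularAt F Γ κ x) :
    tanCone (F ⁻¹' Γ) x = {d | F' d ∈ tanCone Γ (F x)} ∧
    limNormal (F ⁻¹' Γ) x ⊆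
      {ξ | ∃ lam ∈ limNormal Γ (F x), ξ ∈ limSubdiff (fun y => ⟪lam, F y⟫) x} :=
  ⟨Set.ext fun d => ⟨mem_tanCone_of_mem_tanCone_preimage hs hF (hF' d),
    hsub.mem_tanCone_preimage (hF' d)⟩, hsub.limNormal_preimage_subset hs hF hΓ⟩

end Multipliers

theorem MSCQ.exists_metricSubregularAt {n l : ℕ} {F : Eu n → Eu l} {Γ : Set (Eu l)} {x : Eu n}
    (h : MSCQ F Γ x) : ∃ κ, MetricSubregularAt F Γ κ x := by
  obtain ⟨ε, hε, δ, -, κ, hκ, hle⟩ := h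
  refine ⟨⟨κ, hκ.le⟩, ?_⟩
  filter_upwards [closedBall_mem_nhds x hε] with y hy
  exact hle y ⟨mem_closedBall_iff_norm.1 hy, by simp⟩

/-- Under MSCQ, the tangent cone to the feasible set equals the linearization cone and
the limiting normal cone admits the usual upper estimate. -/
theorem stmt6 {n l : ℕ}
    (F : Eu n → Eu l) (F' : Eu n → Eu n → Eu l)
    (hLip : LocallyLipschitz F) (hF' : IsDirDeriv F F')
    (Γ : Set (Eu l)) (hΓne : Γ.Nonempty) (hΓcl : IsClosed Γ)
    (x : Eu n) (hfeas : F x ∈ Γ) (hMSCQ : MSCQ F Γ x) :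
    tanCone (F ⁻¹' Γ) x = linCone F F' Γ x ∧
    limNormal (F ⁻¹' Γ) x ⊆
      {ξ | ∃ lam ∈ limNormal Γ (F x), ξ ∈ scalSubdiff F lam x} := by
  obtain ⟨K, s, hs, hF⟩ := hLip x
  obtain ⟨κ, hsub⟩ := hMSCQ.exists_metricSubregularAt
  exact stmt6_general hs hF (hF' x) hΓcl hsub

end
end
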